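/- Let c₀ > 0 be a rainbow-cycle constant. Let n ≥ 3, δ ∈ (0,1), and let M ∈ F_2^{n×k} with rows v_1,…,v_n be (together with matchings H_1,…,H_n) a binary linear (3,δ)-LCC of block length n and dimension k. Let T ⊆ [n] be any set with |T| ≥ 2·c₀·δ^{-1}·log₂ n·log₂log₂ n, and let W ⊆ [n] be the set of indices j ∈ [n] for which there exists a finite multiset T' of elements of [n] containing j, with |T'| ≤ |T| (counting multiplicity), such that Σ_{t∈T} v_t = Σ_{t∈T'} v_t in F_2^k (the sum over T' counted with multiplicity). Then |W| ≥ (δ/2)·n. -/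

import Mathlib

/-- A binary linear `(r, δ)`-LCC of block length `n` and dimension `k`:
a full-rank matrix whose rows `v 1, …, v n ∈ F₂ᵏ` span `F₂ᵏ`, together with
`r`-uniform matchings `H i` over `[n]` of size at least `δ·n`, such that each
hyperedge `{a₁,…,a_r} ∈ H i` satisfies `v i = v a₁ + ⋯ + v a_r`. -/
def IsBinaryLCC (r : ℕ) (δ : ℝ) {n k : ℕ} (v : Fin n → Fin k → ZMod 2)
    (H : Fin n → Finset (Finset (Fin n))) : Prop :=
  Submodule.span (ZMod 2) (Set.range v) = ⊤ ∧
  (∀ i : Fin n, ∀ e ∈ H i, e.card = r) ∧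
  (∀ i : Fin n, ∀ e ∈ H i, ∀ e' ∈ H i, e ≠ e' → Disjoint e e') ∧
  (∀ i : Fin n, δ * n ≤ ((H i).card : ℝ)) ∧
  (∀ i : Fin n, ∀ e ∈ H i, v i = ∑ a ∈ e, v a)

/-- `c₀ > 0` is a rainbow-cycle constant: for every `N ≥ 3`, every finite index
set (modeled as `Fin τ`), every `N`-element vertex set `V`, and every assignment
of a matching `M t` of `2`-element subsets of `V` to each index `t`, if
`Σ_t |M t| ≥ c₀·N·log₂ N·log₂ log₂ N` then some nonempty subfamily, with one
edge chosen per index, has empty symmetric difference (equivalently, every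
vertex lies in an even number of the chosen edges): a rainbow cycle. -/
def IsRainbowCycleConst (c₀ : ℝ) : Prop :=
  ∀ (N : ℕ), 3 ≤ N →
    ∀ (τ : ℕ) (V : Type) [Fintype V] [DecidableEq V], Fintype.card V = N →
      ∀ M : Fin τ → Finset (Finset V),
        (∀ t, ∀ e ∈ M t, e.card = 2) →
        (∀ t, ∀ e ∈ M t, ∀ e' ∈ M t, e ≠ e' → Disjoint e e') →
        c₀ * N * Real.logb 2 N * Real.logb 2 (Real.logb 2 N) ≤
          ((∑ t : Fin τ, (M t).card : ℕ) : ℝ) →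
        ∃ S : Finset (Fin τ), S.Nonempty ∧ ∃ e : Fin τ → Finset V,
          (∀ t ∈ S, e t ∈ M t) ∧
          ∀ x : V, Even ((S.filter fun t => x ∈ e t).card)

/-!
Suppose the set `W` of indices reachable from `T` has fewer than `(δ / 2) n` elements. For each
`t ∈ T` a pairwise disjoint family has at most `|W|` members meeting `W`, so at least `(δ / 2) n`
of the correcting triples of `t` avoid `W`. Removing one point `p e` from each such triple `e`
leaves, for every `t`, a matching of pairs in the colour `t`, and these graphs together have enough
edges to contain a rainbow cycle. Over `F₂` the cycle cancels in the sum of the local corrections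
`v t = ∑ a ∈ e t, v a`, leaving `∑ t ∈ S, v t = ∑ t ∈ S, v (p (e t))`. Exchanging each `t ∈ S` for
`p (e t)` thus preserves the sum over `T`, and puts a point outside `W` into `W`.
-/

open Finset

section Matching

variable {α : Type*} [DecidableEq α] {𝓜 : Finset (Finset α)}

theorem card_le_card_filter_disjoint_add_card (h𝓜 : (𝓜 : Set (Finset α)).PairwiseDisjoint id)
    (W : Finset α) : #𝓜 ≤ #{e ∈ 𝓜 | Disjoint e W} + #W := by
  set meeting : Finset (Finset α) := {e ∈ 𝓜 | ¬ Disjoint e W}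
  have traces_disjoint : (meeting : Set (Finset α)).PairwiseDisjoint (· ∩ W) :=
    (h𝓜.subset (coe_subset.2 (filter_subset _ _))).mono fun _ => inter_subset_left
  have traces_nonempty : ∀ e ∈ meeting, (e ∩ W).Nonempty := fun e he =>
    not_disjoint_iff_nonempty_inter.1 (mem_filter.1 he).2
  have card_meeting : #meeting ≤ #W :=
    (card_le_card_biUnion traces_disjoint traces_nonempty).trans
      (card_le_card (biUnion_subset.2 fun _ _ => inter_subset_right))
  rw [← card_filter_add_card_filter_not (s := 𝓜) (Disjoint · W)]
  gcongr

theorem pairwiseDisjoint_image_erase (h𝓜 : (𝓜 : Set (Finset α)).PairwiseDisjoint id)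
    (p : Finset α → α) :
    (↑(𝓜.image fun e => e.erase (p e)) : Set (Finset α)).PairwiseDisjoint id := by
  rw [coe_image]
  exact h𝓜.image_of_le fun e => erase_subset (p e) e

theorem card_image_erase (h𝓜 : (𝓜 : Set (Finset α)).PairwiseDisjoint id)
    (hnt : ∀ e ∈ 𝓜, e.Nontrivial) (p : Finset α → α) :
    #(𝓜.image fun e => e.erase (p e)) = #𝓜 := by
  refine card_image_of_injOn fun e he e' he' heq => ?_
  obtain ⟨a, ha⟩ := (hnt e he).erase_nonempty (a := p e)
  have ha' : a ∈ e'.erase (p e') := heq ▸ ha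
  exact h𝓜.elim_finset he he' a (mem_of_mem_erase ha) (mem_of_mem_erase ha')

end Matching

theorem IsRainbowCycleConst.exists_even_card_filter_mem_erase {c₀ : ℝ}
    (hrc : IsRainbowCycleConst c₀) {V : Type} [Fintype V] [DecidableEq V]
    (hV : 3 ≤ Fintype.card V) {m : ℕ} {𝓜 : Fin m → Finset (Finset V)}
    (hcard : ∀ t, ∀ e ∈ 𝓜 t, #e = 3)
    (hdisj : ∀ t, (𝓜 t : Set (Finset V)).PairwiseDisjoint id)
    (hlarge : c₀ * Fintype.card V * Real.logb 2 (Fintype.card V) *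
      Real.logb 2 (Real.logb 2 (Fintype.card V)) ≤ ((∑ t, #(𝓜 t) : ℕ) : ℝ)) :
    ∃ S : Finset (Fin m), S.Nonempty ∧ ∃ (e : Fin m → Finset V) (p : Fin m → V),
      (∀ t ∈ S, e t ∈ 𝓜 t ∧ p t ∈ e t) ∧ ∀ x, Even #{t ∈ S | x ∈ (e t).erase (p t)} := by
  have : Nonempty V := Fintype.card_pos_iff.1 (by lia)
  choose! p hp using fun (e : Finset V) (he : e.Nonempty) => he
  have hp𝓜 : ∀ t, ∀ e ∈ 𝓜 t, p e ∈ e := fun t e he =>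
    hp e (card_pos.1 (by rw [hcard t e he]; norm_num))
  have hnt : ∀ t, ∀ e ∈ 𝓜 t, e.Nontrivial := fun t e he =>
    one_lt_card_iff_nontrivial.1 (by rw [hcard t e he]; norm_num)
  obtain ⟨S, hS, pair, hpair, heven⟩ := hrc _ hV m V rfl
    (fun t => (𝓜 t).image fun e => e.erase (p e))
    (fun t => forall_mem_image.2 fun e he => by
      rw [card_erase_of_mem (hp𝓜 t e he), hcard t e he])
    (fun t e he e' he' hne => pairwiseDisjoint_image_erase (hdisj t) p he he' hne)
    (by simpa only [card_image_erase (hdisj _) (hnt _)] using hlarge)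
  choose! e he using fun t ht => mem_image.1 (hpair t ht)
  refine ⟨S, hS, e, fun t => p (e t), fun t ht => ⟨(he t ht).1, hp𝓜 t _ (he t ht).1⟩, fun x => ?_⟩
  convert heven x using 2
  exact filter_congr fun t ht => by rw [(he t ht).2]

section Exchange

variable {ι A : Type*}

/-- The indices that can be brought into `T` by an exchange: those occurring in some multiset of at
most `|T|` indices with the same `v`-sum as `T`. For `T ⊆ [n]` and `v` the rows of a code this is
the set `W` of the paper. -/
def exchangeSet [AddCommMonoid A] (v : ι → A) (T : Multiset ι) : Set ι :=
  {j | ∃ T' : Multiset ι, j ∈ T' ∧ T'.card ≤ T.card ∧ (T.map v).sum = (T'.map v).sum}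

theorem mem_exchangeSet_of_sum_eq [AddCommMonoid A] {τ : Type*} [Fintype τ] {v : ι → A}
    {f p : τ → ι} {S : Finset τ} (hsum : ∑ t ∈ S, v (f t) = ∑ t ∈ S, v (p t))
    {t : τ} (ht : t ∈ S) :
    p t ∈ exchangeSet v (univ.val.map f) := by
  classical
  refine ⟨univ.val.map (S.piecewise p f), ?_, by simp only [Multiset.card_map, le_refl], ?_⟩
  · exact Multiset.mem_map.2 ⟨t, mem_univ t, S.piecewise_eq_of_mem p f ht⟩
  · simp only [Multiset.map_map]
    change ∑ t, v (f t) = ∑ t, v (S.piecewise p f t)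
    rw [← sum_add_sum_compl S, ← sum_add_sum_compl S fun t => v (S.piecewise p f t), hsum]
    congr 1 <;> refine sum_congr rfl fun t ht => ?_
    · rw [S.piecewise_eq_of_mem p f ht]
    · rw [S.piecewise_eq_of_notMem p f (mem_compl.1 ht)]

theorem sum_sum_eq_zero_of_even_card_filter_mem [AddCommGroup A] [Module (ZMod 2) A] [DecidableEq ι]
    {τ : Type*} {S : Finset τ} {e : τ → Finset ι} (heven : ∀ x, Even #{t ∈ S | x ∈ e t})
    (v : ι → A) :
    ∑ t ∈ S, ∑ a ∈ e t, v a = 0 := by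
  calc ∑ t ∈ S, ∑ a ∈ e t, v a
      = ∑ a ∈ S.biUnion e, ∑ t ∈ S with a ∈ e t, v a := sum_comm' fun t a => by
        simp only [mem_filter, mem_biUnion]
        tauto
    _ = 0 := sum_eq_zero fun a _ => by
        obtain ⟨m, hm⟩ := heven a
        rw [sum_const, hm, add_nsmul, ZModModule.add_self]

end Exchange

section LocalCorrection

variable {ι : Type} [Fintype ι] {A : Type*} [AddCommGroup A] [Module (ZMod 2) A] {c₀ : ℝ}

theorem IsRainbowCycleConst.exists_mem_exchangeSet (hrc : IsRainbowCycleConst c₀)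
    (hι : 3 ≤ Fintype.card ι) {v : ι → A} {m : ℕ} {f : Fin m → ι}
    {𝓜 : Fin m → Finset (Finset ι)}
    (hcard : ∀ t, ∀ e ∈ 𝓜 t, #e = 3)
    (hdisj : ∀ t, (𝓜 t : Set (Finset ι)).PairwiseDisjoint id)
    (hsum : ∀ t, ∀ e ∈ 𝓜 t, v (f t) = ∑ a ∈ e, v a)
    (hlarge : c₀ * Fintype.card ι * Real.logb 2 (Fintype.card ι) *
      Real.logb 2 (Real.logb 2 (Fintype.card ι)) ≤ ((∑ t, #(𝓜 t) : ℕ) : ℝ)) :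
    ∃ t, ∃ e ∈ 𝓜 t, ∃ a ∈ e, a ∈ exchangeSet v (univ.val.map f) := by
  classical
  obtain ⟨S, ⟨t, ht⟩, e, p, hep, heven⟩ :=
    hrc.exists_even_card_filter_mem_erase hι hcard hdisj hlarge
  have exchange : ∑ t ∈ S, v (f t) = ∑ t ∈ S, v (p t) := by
    calc ∑ t ∈ S, v (f t)
        = ∑ t ∈ S, (∑ a ∈ (e t).erase (p t), v a + v (p t)) := sum_congr rfl fun t ht => by
          rw [hsum t _ (hep t ht).1, sum_erase_add _ _ (hep t ht).2]
      _ = ∑ t ∈ S, v (p t) := by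
          rw [sum_add_distrib, sum_sum_eq_zero_of_even_card_filter_mem heven, zero_add]
  exact ⟨t, e t, (hep t ht).1, p t, (hep t ht).2, mem_exchangeSet_of_sum_eq exchange ht⟩

theorem stmt2_general (hrc : IsRainbowCycleConst c₀) (hι : 3 ≤ Fintype.card ι)
    {δ : ℝ} (hδ : 0 < δ) {v : ι → A} {H : ι → Finset (Finset ι)} {T : Multiset ι}
    (hcard : ∀ i ∈ T, ∀ e ∈ H i, #e = 3)
    (hdisj : ∀ i ∈ T, (H i : Set (Finset ι)).PairwiseDisjoint id)
    (hsize : ∀ i ∈ T, δ * Fintype.card ι ≤ #(H i))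
    (hsum : ∀ i ∈ T, ∀ e ∈ H i, v i = ∑ a ∈ e, v a)
    (hT : 2 * c₀ * δ⁻¹ * Real.logb 2 (Fintype.card ι) *
      Real.logb 2 (Real.logb 2 (Fintype.card ι)) ≤ T.card) :
    δ / 2 * Fintype.card ι ≤ (exchangeSet v T).ncard := by
  classical
  obtain ⟨m, f, rfl⟩ : ∃ (m : ℕ) (f : Fin m → ι), univ.val.map f = T :=
    ⟨_, T.toList.get, by rw [Fin.univ_val_map, List.ofFn_get, Multiset.coe_toList]⟩
  have hf : ∀ t, f t ∈ univ.val.map f := fun t => Multiset.mem_map_of_mem f (mem_univ t)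
  by_contra! hsmall
  set W : Finset ι := (exchangeSet v (univ.val.map f)).toFinset
  rw [Set.ncard_eq_toFinset_card'] at hsmall
  let avoiding (t : Fin m) : Finset (Finset ι) := {e ∈ H (f t) | Disjoint e W}
  have sub : ∀ t, avoiding t ⊆ H (f t) := fun t => filter_subset _ _
  have card_avoiding : ∀ t, δ / 2 * Fintype.card ι ≤ #(avoiding t) := fun t => by
    have : (#(H (f t)) : ℝ) ≤ #(avoiding t) + #W := mod_cast
      card_le_card_filter_disjoint_add_card (hdisj _ (hf t)) W
    linarith [hsize _ (hf t)]
  have hlarge : c₀ * Fintype.card ι * Real.logb 2 (Fintype.card ι) *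
      Real.logb 2 (Real.logb 2 (Fintype.card ι)) ≤ ((∑ t, #(avoiding t) : ℕ) : ℝ) := by
    calc _ = 2 * c₀ * δ⁻¹ * Real.logb 2 (Fintype.card ι) *
          Real.logb 2 (Real.logb 2 (Fintype.card ι)) * (δ / 2 * Fintype.card ι) := by field_simp
      _ ≤ m * (δ / 2 * Fintype.card ι) := by
          gcongr
          simpa only [Multiset.card_map, card_val, card_fin] using hT
      _ = ∑ _t : Fin m, δ / 2 * Fintype.card ι := by
          rw [sum_const, card_fin, nsmul_eq_mul]
      _ ≤ ∑ t, (#(avoiding t) : ℝ) := sum_le_sum fun t _ => card_avoiding t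
      _ = _ := (Nat.cast_sum _ _).symm
  obtain ⟨t, e, he, a, hae, haW⟩ := hrc.exists_mem_exchangeSet hι
    (fun t e he => hcard _ (hf t) e (sub t he))
    (fun t => (hdisj _ (hf t)).subset (coe_subset.2 (sub t)))
    (fun t e he => hsum _ (hf t) e (sub t he)) hlarge
  exact disjoint_left.1 (mem_filter.1 he).2 hae (Set.mem_toFinset.2 haW)

end LocalCorrection

/-- For a binary linear `(3,δ)`-LCC and any `T ⊆ [n]` of size at least
`2·c₀·δ⁻¹·log₂ n·log₂ log₂ n`, the set `W` of indices `j` appearing in some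
multiset `T'` with `|T'| ≤ |T|` and `Σ_{t∈T} v t = Σ_{t∈T'} v t` has size at
least `(δ/2)·n`. -/
theorem stmt2 (c₀ : ℝ) (hc₀ : 0 < c₀) (hrc : IsRainbowCycleConst c₀)
    (n k : ℕ) (δ : ℝ) (hn : 3 ≤ n) (hδ0 : 0 < δ) (hδ1 : δ < 1)
    (v : Fin n → Fin k → ZMod 2) (H : Fin n → Finset (Finset (Fin n)))
    (hlcc : IsBinaryLCC 3 δ v H)
    (T : Finset (Fin n))
    (hT : 2 * c₀ * δ⁻¹ * Real.logb 2 n * Real.logb 2 (Real.logb 2 n) ≤ (T.card : ℝ)) :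
    δ / 2 * n ≤
      (({j : Fin n | ∃ T' : Multiset (Fin n), j ∈ T' ∧ Multiset.card T' ≤ T.card ∧
          ∑ t ∈ T, v t = (T'.map v).sum}).ncard : ℝ) := by
  obtain ⟨-, hcard, hdisj, hsize, hsum⟩ := hlcc
  have h := stmt2_general hrc (ι := Fin n) (by rwa [Fintype.card_fin]) hδ0 (T := T.val)
    (fun i _ => hcard i) (fun i _ e he e' => hdisj i e he e')
    (fun i _ => by rw [Fintype.card_fin]; exact hsize i) (fun i _ => hsum i)
    (by rwa [Fintype.card_fin])
  rwa [Fintype.card_fin] at h
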